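/- arXiv:2302.00608 — 2 statements merged into one kernel-verified Lean document; each statement's English description precedes it below -/
import Mathlib

section
/- Let G be a finite perfect graph with vertex set V and let w : V → ℚ be a nonnegative weight function. Then the core of the investment management game on G is non-empty: there exists a function y assigning a nonnegative rational to each maximal clique of G such that ∑_Q y(Q) = cost(V) and money_y(S) ≥ cost(S) for every scenario S ⊆ V. -/
/-!
The game has a core element as soon as the maximum weight of a stable set equals the minimum
weight of a fractional clique cover: if `y` is such a cover, a stable set `O ⊆ S` meets each clique
at most once, so `w(O) ≤ ∑_{v ∈ O} ∑_{Q ∋ v} y(Q) ≤ money_y(S)`. After clearing denominators, this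
min-max equality is proved for integer weights in two steps, following Lovász.

* `stable_cover` (the replication lemma): in a perfect graph, if `c : V → ℕ` has weight at most `k`
  on every clique, then `k` stable sets cover each vertex `v` at least `c v` times. When `c ≤ 1`,
  this is perfection of the subgraph induced on the support of `c`. When `c v ≥ 2`, a cover for
  `c` lowered by one at `v` contains a stable set `T ∋ v`; this `T` meets the support of `c` in
  every clique of weight `k`, so it can be split off.

* `clique_cover`: if `w : V → ℕ` has weight at most `a` on every stable set, then `a` cliques cover
  each `v` at least `w v` times. It is enough to find a clique meeting every stable set of weight
  `a` (`exists_clique_reduce`). Otherwise each of the `m` cliques `Q` misses a stable set `O_Q` of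
  weight `a`; the function counting the sets `O_Q` containing a vertex is then at most `m - 1` on
  each clique, so `m - 1` stable sets cover it, and `m a ≤ (m - 1) a`, which is absurd.
-/

open Finset

/-- `O` is a stable (independent) set in `G`. -/
def IsStableSet {V : Type*} (G : SimpleGraph V) (O : Finset V) : Prop :=
  ∀ u ∈ O, ∀ v ∈ O, ¬ G.Adj u v

/-- `Q` is a clique in `G`. -/
def IsCliqueF {V : Type*} (G : SimpleGraph V) (Q : Finset V) : Prop :=
  ∀ u ∈ Q, ∀ v ∈ Q, u ≠ v → G.Adj u v

/-- `Q` is a maximal clique in `G`. -/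
def IsMaximalCliqueF {V : Type*} (G : SimpleGraph V) (Q : Finset V) : Prop :=
  IsCliqueF G Q ∧ ∀ Q', IsCliqueF G Q' → Q ⊆ Q' → Q' = Q

open Classical in
/-- The set of maximal cliques of `G`. -/
noncomputable def maximalCliques {V : Type*} (G : SimpleGraph V) [Fintype V] :
    Finset (Finset V) :=
  univ.powerset.filter (IsMaximalCliqueF G)

open Classical in
/-- The set of all cliques of `G`. -/
noncomputable def cliques {V : Type*} (G : SimpleGraph V) [Fintype V] :
    Finset (Finset V) :=
  univ.powerset.filter (IsCliqueF G)

open Classical in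
/-- `cost S` : maximum weight of a stable set contained in `S`. -/
noncomputable def cost {V : Type*} (G : SimpleGraph V) [Fintype V] (w : V → ℚ)
    (S : Finset V) : ℚ :=
  (S.powerset.filter (IsStableSet G)).sup'
    ⟨∅, by simp [IsStableSet]⟩ (fun O => ∑ v ∈ O, w v)

open Classical in
/-- Integer version of `cost`. -/
noncomputable def costNat {V : Type*} (G : SimpleGraph V) [Fintype V] (w : V → ℕ)
    (S : Finset V) : ℕ :=
  (S.powerset.filter (IsStableSet G)).sup'
    ⟨∅, by simp [IsStableSet]⟩ (fun O => ∑ v ∈ O, w v)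

open Classical in
/-- `money y S` : total dual weight of the maximal cliques intersecting `S`. -/
noncomputable def money {V : Type*} (G : SimpleGraph V) [Fintype V]
    (y : Finset V → ℚ) (S : Finset V) : ℚ :=
  ∑ Q ∈ (maximalCliques G).filter (fun Q => (Q ∩ S).Nonempty), y Q

/-- `G` is a perfect graph: for every induced subgraph, the clique number
equals the chromatic number. -/
def IsPerfect {V : Type*} (G : SimpleGraph V) [Fintype V] : Prop :=
  ∀ S : Finset V,
    ((G.induce (S : Set V)).cliqueNum : ℕ∞) = (G.induce (S : Set V)).chromaticNumber

open Classical in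
/-- A clique and a stable set share at most one vertex; here as a sum of indicators over the
clique. -/
lemma sum_clique_stable_le_one {V : Type*} {G : SimpleGraph V} {Q T : Finset V}
    (hQ : IsCliqueF G Q) (hT : IsStableSet G T) :
    ∑ v ∈ Q, (if v ∈ T then 1 else 0) ≤ 1 := by
  rw [← Finset.sum_filter, ← Finset.card_eq_sum_ones, Finset.card_le_one]
  intro a ha b hb
  rw [Finset.mem_filter] at ha hb
  by_contra hne
  exact hT a ha.2 b hb.2 (hQ a ha.1 b hb.1 hne)

open Classical in
/-- Replication lemma for 0/1 weights, which is perfection of the subgraph induced on the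
support. -/
lemma stable_cover_base {V : Type*} [Fintype V] {G : SimpleGraph V} (hG : IsPerfect G)
    (c : V → ℕ) (hc : ∀ v, c v ≤ 1) (k : ℕ)
    (hk : ∀ Q, IsCliqueF G Q → ∑ v ∈ Q, c v ≤ k) :
    ∃ T : Fin k → Finset V, (∀ i, IsStableSet G (T i)) ∧
      ∀ v, c v ≤ ∑ i, if v ∈ T i then 1 else 0 := by
  set S : Finset V := univ.filter (fun v => c v ≠ 0) with hS
  have h1 : (G.induce (S : Set V)).cliqueNum ≤ k := by
    obtain ⟨s, hs⟩ := (G.induce (S : Set V)).exists_isNClique_cliqueNum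
    have hcl : IsCliqueF G (s.map (Function.Embedding.subtype _)) := by
      intro u hu v hv huv
      simp only [Finset.mem_map, Function.Embedding.coe_subtype] at hu hv
      obtain ⟨u', hu', rfl⟩ := hu
      obtain ⟨v', hv', rfl⟩ := hv
      exact hs.isClique hu' hv' (fun h => huv (by rw [h]))
    have h2 := hk _ hcl
    rw [Finset.sum_map] at h2
    rw [← hs.card_eq, Finset.card_eq_sum_ones]
    refine le_trans (Finset.sum_le_sum ?_) h2
    rintro ⟨v, hv⟩ -
    have : v ∈ S := hv
    rw [hS, Finset.mem_filter] at this
    exact Nat.one_le_iff_ne_zero.2 this.2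
  have h3 : (G.induce (S : Set V)).Colorable k := by
    rw [← SimpleGraph.chromaticNumber_le_iff_colorable, ← hG S]
    exact_mod_cast h1
  obtain ⟨C⟩ := h3
  refine ⟨fun i => univ.filter (fun v => ∃ h : v ∈ (S : Set V), C ⟨v, h⟩ = i), ?_, ?_⟩
  · intro i u hu v hv hadj
    simp only [Finset.mem_filter, Finset.mem_univ, true_and] at hu hv
    obtain ⟨hu, hu'⟩ := hu
    obtain ⟨hv, hv'⟩ := hv
    exact C.valid (v := ⟨u, hu⟩) (w := ⟨v, hv⟩) hadj (hu'.trans hv'.symm)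
  · intro v
    by_cases hv : c v = 0
    · simp [hv]
    · have hvS : v ∈ (S : Set V) := by simp [hS, hv]
      refine (hc v).trans ?_
      refine le_trans ?_ (Finset.single_le_sum (fun _ _ => Nat.zero_le _)
        (Finset.mem_univ (C ⟨v, hvS⟩)))
      rw [if_pos]
      exact Finset.mem_filter.2 ⟨Finset.mem_univ _, hvS, rfl⟩

open Classical in
/-- Replication lemma: the weighted form of `χ = ω`. -/
lemma stable_cover {V : Type*} [Fintype V] {G : SimpleGraph V} (hG : IsPerfect G) :
    ∀ (n : ℕ) (c : V → ℕ), ∑ v, c v = n → ∀ k : ℕ,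
    (∀ Q, IsCliqueF G Q → ∑ v ∈ Q, c v ≤ k) →
    ∃ T : Fin k → Finset V, (∀ i, IsStableSet G (T i)) ∧
      ∀ v, c v ≤ ∑ i, if v ∈ T i then 1 else 0 := by
  intro n
  induction n using Nat.strong_induction_on with
  | _ n ih =>
  intro c hn k hk
  by_cases hc : ∀ v, c v ≤ 1
  · exact stable_cover_base hG c hc k hk
  push Not at hc
  obtain ⟨v, hv⟩ := hc
  obtain ⟨T, hT, hcov⟩ := ih (∑ u, (c u - if u = v then 1 else 0)) (by
    rw [← hn]
    exact Finset.sum_lt_sum (fun _ _ => Nat.sub_le _ _) ⟨v, Finset.mem_univ _, by simp; omega⟩)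
    (fun u => c u - if u = v then 1 else 0) rfl k
    (fun Q hQ => (Finset.sum_le_sum (fun _ _ => Nat.sub_le _ _)).trans (hk Q hQ))
  obtain ⟨i, hi⟩ : ∃ i, v ∈ T i := by
    by_contra hcon
    push Not at hcon
    have := hcov v
    simp [hcon] at this
    omega
  obtain ⟨k, rfl⟩ : ∃ k', k = k' + 1 := ⟨k - 1, by have := i.2; omega⟩
  have hred : ∀ Q, IsCliqueF G Q → ∑ u ∈ Q, (c u - if u ∈ T i then 1 else 0) ≤ k := by
    intro Q hQ
    by_contra hcon
    push Not at hcon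
    -- On a violating clique, lowering `c` along `T i` changes nothing.
    have hle : ∀ u ∈ Q, (c u - if u ∈ T i then 1 else 0) ≤ c u := fun _ _ => Nat.sub_le _ _
    have hQk := hk Q hQ
    have heq := (Finset.sum_eq_sum_iff_of_le hle).1
      (le_antisymm (Finset.sum_le_sum hle) (by omega))
    have hdis : ∀ u ∈ Q, c u ≠ 0 → u ∉ T i := by
      intro u hu hcu hui
      have := heq u hu
      rw [if_pos hui] at this
      omega
    have hvQ : v ∉ Q := fun h => hdis v h (by omega) hi
    -- The part of `Q` in the support of `c` has weight `k + 1`, but `T i` does not cover it.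
    set R := Q.filter (fun u => c u ≠ 0) with hR
    have hRc : IsCliqueF G R := fun a ha b hb =>
      hQ a (Finset.mem_filter.1 ha).1 b (Finset.mem_filter.1 hb).1
    have hsum : ∑ u ∈ R, c u = ∑ u ∈ Q, c u := Finset.sum_filter_ne_zero Q
    have h1 : ∑ u ∈ R, c u ≤ ∑ u ∈ R, ∑ j, if u ∈ T j then 1 else 0 := by
      refine Finset.sum_le_sum fun u hu => ?_
      have := hcov u
      rwa [if_neg (fun h : u = v => hvQ (h ▸ (Finset.mem_filter.1 hu).1)), Nat.sub_zero] at this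
    rw [Finset.sum_comm, Fin.sum_univ_succAbove _ i] at h1
    have h2 : ∑ u ∈ R, (if u ∈ T i then 1 else 0) = 0 :=
      Finset.sum_eq_zero fun u hu => if_neg
        (hdis u (Finset.mem_filter.1 hu).1 (Finset.mem_filter.1 hu).2)
    have h3 : ∑ j : Fin k, ∑ u ∈ R, (if u ∈ T (i.succAbove j) then 1 else 0) ≤ ∑ j : Fin k, 1 :=
      Finset.sum_le_sum fun j _ => sum_clique_stable_le_one hRc (hT _)
    have h4 := Finset.sum_le_sum hle
    simp only [Finset.sum_const, Finset.card_univ, Fintype.card_fin, smul_eq_mul, mul_one] at h3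
    omega
  obtain ⟨T', hT', hcov'⟩ := ih (∑ u, (c u - if u ∈ T i then 1 else 0)) (by
    rw [← hn]
    exact Finset.sum_lt_sum (fun _ _ => Nat.sub_le _ _)
      ⟨v, Finset.mem_univ _, by rw [if_pos hi]; omega⟩) _ rfl k hred
  refine ⟨Fin.cons (T i) T', ?_, ?_⟩
  · intro j
    refine Fin.cases ?_ (fun j => ?_) j
    · simpa using hT i
    · simpa using hT' j
  · intro u
    have := hcov' u
    rw [Fin.sum_univ_succ]
    simp only [Fin.cons_zero, Fin.cons_succ]
    omega

open Classical in
/-- Some clique meets, within the support of `w`, every stable set of the maximal weight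
`a + 1`: lowering `w` along it lowers the bound. -/
lemma exists_clique_reduce {V : Type*} [Fintype V] {G : SimpleGraph V} (hG : IsPerfect G)
    (w : V → ℕ) (a : ℕ) (ha : ∀ O, IsStableSet G O → ∑ v ∈ O, w v ≤ a + 1) :
    ∃ Q, IsCliqueF G Q ∧
      ∀ O, IsStableSet G O → ∑ v ∈ O, (w v - if v ∈ Q then 1 else 0) ≤ a := by
  by_contra hcon
  push Not at hcon
  have key : ∀ Q, ∃ O, IsCliqueF G Q →
      IsStableSet G O ∧ ∑ v ∈ O, w v = a + 1 ∧ ∀ v ∈ O, v ∉ Q := by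
    intro Q
    by_cases hQ : IsCliqueF G Q
    swap
    · exact ⟨∅, fun h => absurd h hQ⟩
    obtain ⟨O, hO, hlt⟩ := hcon Q hQ
    have hOa := ha O hO
    have hle : ∀ u ∈ O, (w u - if u ∈ Q then 1 else 0) ≤ w u := fun _ _ => Nat.sub_le _ _
    have hle' := Finset.sum_le_sum hle
    have heq := (Finset.sum_eq_sum_iff_of_le hle).1 (by omega)
    refine ⟨O.filter (fun u => w u ≠ 0), fun _ => ⟨?_, ?_, ?_⟩⟩
    · exact fun x hx y hy => hO x (Finset.mem_filter.1 hx).1 y (Finset.mem_filter.1 hy).1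
    · rw [Finset.sum_filter_ne_zero]
      omega
    · intro v hv hvQ
      have h1 := heq v (Finset.mem_filter.1 hv).1
      have h2 := (Finset.mem_filter.1 hv).2
      rw [if_pos hvQ] at h1
      omega
  choose O hO using key
  have hmem : ∀ Q, Q ∈ cliques G ↔ IsCliqueF G Q := by
    intro Q
    simp [cliques]
  obtain ⟨m, hm⟩ : ∃ m, (cliques G).card = m + 1 := by
    have : 0 < (cliques G).card := Finset.card_pos.2 ⟨∅, (hmem _).2 (by simp [IsCliqueF])⟩
    exact ⟨_, (Nat.succ_pred_eq_of_pos this).symm⟩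
  have hk : ∀ Q, IsCliqueF G Q →
      ∑ v ∈ Q, (∑ P ∈ cliques G, if v ∈ O P then 1 else 0) ≤ m := by
    intro Q hQ
    rw [Finset.sum_comm, ← Finset.add_sum_erase _ _ ((hmem Q).2 hQ)]
    have h1 : ∑ v ∈ Q, (if v ∈ O Q then 1 else 0) = 0 :=
      Finset.sum_eq_zero fun v hv => if_neg fun h => (hO Q hQ).2.2 v h hv
    have h2 : ∑ P ∈ (cliques G).erase Q, ∑ v ∈ Q, (if v ∈ O P then 1 else 0)
        ≤ ∑ P ∈ (cliques G).erase Q, 1 :=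
      Finset.sum_le_sum fun P hP => sum_clique_stable_le_one hQ
        (hO P ((hmem P).1 (Finset.mem_of_mem_erase hP))).1
    rw [← Finset.card_eq_sum_ones, Finset.card_erase_of_mem ((hmem Q).2 hQ)] at h2
    omega
  obtain ⟨T, hT, hcov⟩ := stable_cover hG _ _ rfl m hk
  -- Double counting of the total weight of the sets `O P`.
  have h1 : ∑ v, (∑ P ∈ cliques G, if v ∈ O P then 1 else 0) * w v = (m + 1) * (a + 1) := by
    simp only [Finset.sum_mul]
    rw [Finset.sum_comm, ← hm, ← smul_eq_mul, ← Finset.sum_const]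
    refine Finset.sum_congr rfl fun P hP => ?_
    rw [← (hO P ((hmem P).1 hP)).2.1]
    simp
  have h2 : ∑ v, (∑ i, if v ∈ T i then 1 else 0) * w v ≤ m * (a + 1) := by
    simp only [Finset.sum_mul]
    rw [Finset.sum_comm]
    calc _ ≤ ∑ i : Fin m, (a + 1) := Finset.sum_le_sum fun i _ => by
          simpa using ha (T i) (hT i)
      _ = _ := by simp
  have h3 := Finset.sum_le_sum fun v (_ : v ∈ (univ : Finset V)) =>
    Nat.mul_le_mul_right (w v) (hcov v)
  nlinarith

open Classical in
/-- Weighted clique covers: the complementary statement to `stable_cover`. -/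
lemma clique_cover {V : Type*} [Fintype V] {G : SimpleGraph V} (hG : IsPerfect G) (a : ℕ) :
    ∀ w : V → ℕ, (∀ O, IsStableSet G O → ∑ v ∈ O, w v ≤ a) →
    ∃ T : Fin a → Finset V, (∀ i, IsCliqueF G (T i)) ∧
      ∀ v, w v ≤ ∑ i, if v ∈ T i then 1 else 0 := by
  induction a with
  | zero =>
    intro w hw
    refine ⟨fun _ => ∅, fun i => i.elim0, fun v => ?_⟩
    have := hw {v} (by simp [IsStableSet])
    simpa using this
  | succ a ih =>
    intro w hw
    obtain ⟨Q, hQ, hred⟩ := exists_clique_reduce hG w a hw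
    obtain ⟨T, hT, hcov⟩ := ih _ hred
    refine ⟨Fin.cons Q T, ?_, ?_⟩
    · intro j
      refine Fin.cases ?_ (fun j => ?_) j
      · simpa using hQ
      · simpa using hT j
    · intro u
      have := hcov u
      rw [Fin.sum_univ_succ]
      simp only [Fin.cons_zero, Fin.cons_succ]
      omega

lemma exists_maximalClique_superset {V : Type*} [Fintype V] {G : SimpleGraph V} {Q : Finset V}
    (hQ : IsCliqueF G Q) : ∃ M ∈ maximalCliques G, Q ⊆ M := by
  obtain ⟨M, hQM, hM⟩ := (Set.toFinite {R | IsCliqueF G R}).exists_le_maximal hQ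
  refine ⟨M, ?_, hQM⟩
  simp only [maximalCliques, Finset.powerset_univ, Finset.mem_filter, Finset.mem_univ, true_and]
  exact ⟨hM.prop, fun R hR hMR => (hM.eq_of_le hR hMR).symm⟩

lemma exists_common_denominator {V : Type*} [Fintype V] (w : V → ℚ) (hw : ∀ v, 0 ≤ w v) :
    ∃ (N : ℕ) (n : V → ℕ), 0 < N ∧ ∀ v, w v = n v / N := by
  refine ⟨∏ v, (w v).den, fun v => (w v).num.toNat * ((∏ u, (w u).den) / (w v).den),
    Finset.prod_pos fun v _ => (w v).pos, fun v => ?_⟩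
  have hN : ((∏ u, (w u).den : ℕ) : ℚ) ≠ 0 := by
    exact_mod_cast (Finset.prod_pos fun v _ => (w v).pos).ne'
  have hd : ((w v).den : ℚ) ≠ 0 := by exact_mod_cast (w v).pos.ne'
  have hnum : (((w v).num.toNat : ℕ) : ℚ) = (w v).num := by
    exact_mod_cast Int.toNat_of_nonneg (Rat.num_nonneg.2 (hw v))
  rw [Nat.cast_mul, Nat.cast_div (Finset.dvd_prod_of_mem _ (Finset.mem_univ v)) hd, hnum]
  conv_lhs => rw [← Rat.num_div_den (w v)]
  field_simp

/-- the core of the investment management game over a perfect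
graph is non-empty. -/
theorem core_nonempty {V : Type*} [Fintype V] (G : SimpleGraph V)
    (hG : IsPerfect G) (w : V → ℚ) (hw : ∀ v, 0 ≤ w v) :
    ∃ y : Finset V → ℚ,
      (∀ Q ∈ maximalCliques G, 0 ≤ y Q) ∧
      (∑ Q ∈ maximalCliques G, y Q = cost G w univ) ∧
      (∀ S : Finset V, cost G w S ≤ money G y S) := by
  classical
  obtain ⟨N, n, hN, hwn⟩ := exists_common_denominator w hw
  have hNQ : (0 : ℚ) < N := by exact_mod_cast hN
  have hwsum : ∀ O : Finset V, ∑ v ∈ O, w v = ((∑ v ∈ O, n v : ℕ) : ℚ) / N := by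
    intro O
    rw [Nat.cast_sum, Finset.sum_div]
    exact Finset.sum_congr rfl fun v _ => hwn v
  -- `O₀` is a maximum weight stable set.
  obtain ⟨O₀, hO₀, hmax⟩ := Finset.exists_mem_eq_sup'
    (s := (univ : Finset V).powerset.filter (IsStableSet G))
    ⟨∅, by simp [IsStableSet]⟩ (fun O => ∑ v ∈ O, w v)
  have hcost : cost G w univ = ((∑ v ∈ O₀, n v : ℕ) : ℚ) / N := by
    rw [← hwsum, ← hmax]
    simp only [cost]
  have ha : ∀ O, IsStableSet G O → ∑ v ∈ O, n v ≤ ∑ v ∈ O₀, n v := by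
    intro O hO
    have h1 : ∑ v ∈ O, w v ≤ ∑ v ∈ O₀, w v := by
      rw [← hmax]
      exact Finset.le_sup' (fun O => ∑ v ∈ O, w v) (by simpa using hO)
    rw [hwsum, hwsum, div_le_div_iff_of_pos_right hNQ] at h1
    exact_mod_cast h1
  obtain ⟨T, hT, hcov⟩ := clique_cover hG _ n ha
  choose M hM hTM using fun i => exists_maximalClique_superset (hT i)
  -- Sums of `y` over a family of maximal cliques count the indices `i` with `M i` in the family.
  have hy : ∀ F : Finset (Finset V), ∑ Q ∈ F, ((∑ i, if M i = Q then (1 : ℚ) else 0) / N) =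
      (∑ i, if M i ∈ F then (1 : ℚ) else 0) / N := by
    intro F
    rw [← Finset.sum_div, Finset.sum_comm]
    simp
  refine ⟨fun Q => (∑ i, if M i = Q then (1 : ℚ) else 0) / N, ?_, ?_, ?_⟩
  · intro Q _
    exact div_nonneg (Finset.sum_nonneg fun i _ => by split_ifs <;> norm_num) hNQ.le
  · rw [hy, hcost]
    simp [hM]
  · intro S
    unfold cost money
    refine Finset.sup'_le _ _ fun O hO => ?_
    rw [Finset.mem_filter, Finset.mem_powerset] at hO
    obtain ⟨hOS, hO⟩ := hO
    rw [hy, hwsum, div_le_div_iff_of_pos_right hNQ]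
    have h1 : ∑ v ∈ O, n v ≤ ∑ v ∈ O, ∑ i, if v ∈ M i then 1 else 0 := by
      refine Finset.sum_le_sum fun v _ => (hcov v).trans (Finset.sum_le_sum fun i _ => ?_)
      by_cases h : v ∈ T i
      · rw [if_pos h, if_pos (hTM i h)]
      · rw [if_neg h]
        exact Nat.zero_le _
    rw [Finset.sum_comm] at h1
    refine le_trans (Nat.cast_le.2 h1) ?_
    rw [Nat.cast_sum]
    refine Finset.sum_le_sum fun i _ => ?_
    have hMi : IsMaximalCliqueF G (M i) := by
      have := hM i
      simp only [maximalCliques, Finset.mem_filter] at this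
      exact this.2
    have hswap : ∑ v ∈ O, (if v ∈ M i then 1 else 0) = ∑ v ∈ M i, (if v ∈ O then 1 else 0) := by
      simp only [← Finset.sum_filter]
      rw [Finset.filter_mem_eq_inter, Finset.filter_mem_eq_inter, Finset.inter_comm]
    split_ifs with h
    · rw [hswap]
      exact_mod_cast sum_clique_stable_le_one hMi.1 hO
    · rw [Finset.sum_eq_zero]
      · simp
      · intro v hv
        refine if_neg fun hvM => h ?_
        rw [Finset.mem_filter]
        refine ⟨hM i, v, ?_⟩
        simp [hvM, hOS hv]
end

section
/- Let G be a finite perfect graph with vertex set V and let w : V → ℚ be a nonnegative weight function. Then for every x : V → ℚ with x(v) ≥ 0 for all v and ∑_{v ∈ Q} x(v) ≤ 1 for every clique Q of G, one has ∑_{v ∈ V} w(v)·x(v) ≤ cost(V); that is, the optimum of the LP-relaxation of the maximum weight stable set problem over the clique-constraint polytope equals the maximum weight of a stable set. -/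
/-!
Write `x = m / N` with `m : V → ℕ` and a common denominator `N`. The clique constraints say that every
clique has `m`-weight at most `N`. The heart of the proof is a weighted form of Lovász's replication
lemma (`exists_stable_cover`): in a perfect graph such an `m` is the sum of the indicator vectors of
`N` stable sets. Summing `w` over these sets gives `∑ w v * m v ≤ N * cost`, and dividing by `N`
gives the claim.

The replication lemma is proved by induction on `∑ m`. If `m ≤ 1`, it is a colouring of the
subgraph induced on the support of `m`, which exists by perfection. Otherwise pick `v` with
`2 ≤ m v`, lower `m v` by one to get `m'`, decompose `m'` into `N` stable sets, and let `A` be one of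
them containing `v`. A clique of `m'`-weight `N` avoids `v` (its `m`-weight would exceed `N`) and
meets each of the `N` stable sets, in particular `A \ {v}`. So `m - 1_A = m' - 1_{A \ {v}}` has
all clique weights at most `N - 1`; decompose it into `N - 1` stable sets and add `A`.
-/

open Finset

open Classical in
/-- The case of a 0/1 vector `m` of the replication lemma: a colouring of the induced subgraph on the
support of `m`. -/
lemma exists_stable_cover_of_le_one {V : Type*} [Fintype V] (G : SimpleGraph V)
    (hG : IsPerfect G) (m : V → ℕ) (N : ℕ) (hm : ∀ v, m v ≤ 1)
    (hQ : ∀ Q : Finset V, IsCliqueF G Q → ∑ v ∈ Q, m v ≤ N) :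
    ∃ c : Fin N → Finset V, (∀ i, IsStableSet G (c i)) ∧
      ∀ v, m v = ∑ i, if v ∈ c i then 1 else 0 := by
  set S : Finset V := univ.filter (fun v => m v = 1) with hS
  have hmS : ∀ v, v ∈ S ↔ m v = 1 := by simp [hS]
  have hcl : (G.induce (S : Set V)).cliqueNum ≤ N := by
    obtain ⟨s, hs⟩ := (G.induce (S : Set V)).exists_isNClique_cliqueNum
    have h1 := hQ (s.map (Function.Embedding.subtype _)) (by
      intro u hu v hv huv
      simp only [Finset.mem_map, Function.Embedding.subtype_apply] at hu hv
      obtain ⟨a, ha, rfl⟩ := hu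
      obtain ⟨b, hb, rfl⟩ := hv
      exact hs.1 ha hb (fun h => huv (by rw [h])))
    rw [Finset.sum_map] at h1
    have h2 : ∑ a ∈ s, m (Function.Embedding.subtype _ a) = ∑ a ∈ s, 1 :=
      Finset.sum_congr rfl (fun a _ => (hmS _).1 a.2)
    rw [h2, Finset.sum_const, smul_eq_mul, mul_one, hs.2] at h1
    exact h1
  have hcol : (G.induce (S : Set V)).Colorable N := by
    rw [← SimpleGraph.chromaticNumber_le_iff_colorable, ← hG S]
    exact_mod_cast hcl
  obtain ⟨C⟩ := hcol
  refine ⟨fun i => univ.filter (fun v => ∃ h : v ∈ S, C ⟨v, h⟩ = i), ?_, ?_⟩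
  · intro i u hu v hv huv
    simp only [Finset.mem_filter, Finset.mem_univ, true_and] at hu hv
    obtain ⟨hu, hu'⟩ := hu
    obtain ⟨hv, hv'⟩ := hv
    have hadj : (G.induce (S : Set V)).Adj ⟨u, hu⟩ ⟨v, hv⟩ := huv
    exact C.valid hadj (hu'.trans hv'.symm)
  · intro v
    by_cases hv : v ∈ S
    · simp [hv, (hmS v).1 hv]
    · have : m v = 0 := by
        have h1 := hm v
        have h2 := mt (hmS v).2 hv
        omega
      simp [hv, this]

open Classical in
/-- Weighted replication lemma: in a perfect graph, a vector `m` all of whose clique weights are at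
most `N` is the sum of the indicator vectors of `N` stable sets. -/
lemma exists_stable_cover {V : Type*} [Fintype V] (G : SimpleGraph V) (hG : IsPerfect G) :
    ∀ (k : ℕ) (m : V → ℕ) (N : ℕ), ∑ v, m v = k →
    (∀ Q : Finset V, IsCliqueF G Q → ∑ v ∈ Q, m v ≤ N) →
    ∃ c : Fin N → Finset V, (∀ i, IsStableSet G (c i)) ∧
      ∀ v, m v = ∑ i, if v ∈ c i then 1 else 0 := by
  intro k
  induction k using Nat.strong_induction_on with
  | _ k ih =>
  intro m N hk hQ
  by_cases hm : ∀ v, m v ≤ 1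
  · exact exists_stable_cover_of_le_one G hG m N hm hQ
  push Not at hm
  obtain ⟨v, hv⟩ := hm
  have hNpos : 2 ≤ N := by
    have := hQ {v} (by
      intro a ha b hb hab
      simp only [Finset.mem_singleton] at ha hb
      exact absurd (ha.trans hb.symm) hab)
    rw [Finset.sum_singleton] at this
    omega
  obtain ⟨M, rfl⟩ : ∃ M, N = M + 1 := ⟨N - 1, by omega⟩
  set m' : V → ℕ := fun u => if u = v then m u - 1 else m u with hm'
  have hm'v : m' v = m v - 1 := by simp [hm']
  have hm'u : ∀ u, u ≠ v → m' u = m u := fun u hu => by simp [hm', hu]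
  have hm'le : ∀ u, m' u ≤ m u := by
    intro u
    by_cases hu : u = v
    · rw [hu]; omega
    · rw [hm'u u hu]
  have hlt' : ∑ u, m' u < k := by
    rw [← hk]
    exact Finset.sum_lt_sum (fun u _ => hm'le u) ⟨v, Finset.mem_univ _, by omega⟩
  obtain ⟨c, hc, hcm⟩ := ih _ hlt' m' (M + 1) rfl
    (fun Q h => (Finset.sum_le_sum (fun u _ => hm'le u)).trans (hQ Q h))
  obtain ⟨i, hi⟩ : ∃ i, v ∈ c i := by
    by_contra h
    push Not at h
    have := hcm v
    simp only [h, if_false, Finset.sum_const_zero] at this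
    omega
  -- `m'' = m - 1_A` for `A = c i`; the subtraction does not truncate.
  have hpos : ∀ u ∈ c i, 1 ≤ m' u := by
    intro u hu
    rw [hcm u]
    have := Finset.single_le_sum (f := fun j => if u ∈ c j then 1 else 0)
      (fun _ _ => Nat.zero_le _) (Finset.mem_univ i)
    simpa [hu] using this
  set m'' : V → ℕ := fun u => m u - (if u ∈ c i then 1 else 0) with hm''
  have hmm : ∀ u, m u = (if u ∈ c i then 1 else 0) + m'' u := by
    intro u
    simp only [hm'']
    split_ifs with hu
    · have := hpos u hu
      have := hm'le u
      omega
    · omega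
  have hlt'' : ∑ u, m'' u < k := by
    rw [← hk]
    refine Finset.sum_lt_sum (fun u _ => by have := hmm u; omega) ⟨v, Finset.mem_univ _, ?_⟩
    have := hmm v
    simp only [hi, if_true] at this
    omega
  have hle'' : ∀ u, m'' u ≤ m' u := by
    intro u
    by_cases hu : u = v
    · subst hu
      have := hmm u
      simp only [hi, if_true] at this
      omega
    · rw [hm'u u hu]
      have := hmm u
      omega
  have hQ'' : ∀ Q : Finset V, IsCliqueF G Q → ∑ u ∈ Q, m'' u ≤ M := by
    intro Q hq
    have hN := hQ Q hq
    by_cases hvQ : v ∈ Q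
    · have : ∑ u ∈ Q, m'' u < ∑ u ∈ Q, m u := by
        refine Finset.sum_lt_sum (fun u _ => by have := hmm u; omega) ⟨v, hvQ, ?_⟩
        have := hmm v
        simp only [hi, if_true] at this
        omega
      omega
    -- If `A` meets `Q`, the weight drops; otherwise only `M` of the stable sets can meet `Q`.
    by_cases hA : ∃ u ∈ Q, u ∈ c i
    · obtain ⟨u, huQ, hu⟩ := hA
      have : ∑ u ∈ Q, m'' u < ∑ u ∈ Q, m u := by
        refine Finset.sum_lt_sum (fun u _ => by have := hmm u; omega) ⟨u, huQ, ?_⟩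
        have := hmm u
        simp only [hu, if_true] at this
        omega
      omega
    · push Not at hA
      have hone : ∀ j, ∑ u ∈ Q, (if u ∈ c j then 1 else 0) ≤ 1 := by
        intro j
        rw [← Finset.card_filter, Finset.card_le_one]
        intro a ha b hb
        rw [Finset.mem_filter] at ha hb
        by_contra hab
        exact hc j a ha.2 b hb.2 (hq a ha.1 b hb.1 hab)
      calc ∑ u ∈ Q, m'' u ≤ ∑ u ∈ Q, m' u := Finset.sum_le_sum (fun u _ => hle'' u)
        _ = ∑ u ∈ Q, ∑ j, (if u ∈ c j then 1 else 0) :=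
          Finset.sum_congr rfl (fun u _ => hcm u)
        _ = ∑ j, ∑ u ∈ Q, (if u ∈ c j then 1 else 0) := Finset.sum_comm
        _ ≤ ∑ j, (if j = i then 0 else 1) := by
          refine Finset.sum_le_sum (fun j _ => ?_)
          split_ifs with hj
          · subst hj
            exact (Finset.sum_eq_zero (fun u hu => if_neg (hA u hu))).le
          · exact hone j
        _ ≤ M := by
          rw [Fin.sum_univ_succAbove _ i]
          simp [Fin.succAbove_ne]
  obtain ⟨d, hd, hdm⟩ := ih _ hlt'' m'' M rfl hQ''
  refine ⟨Fin.cons (c i) d, ?_, ?_⟩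
  · intro j
    refine Fin.cases ?_ (fun j => ?_) j
    · exact hc i
    · exact hd j
  · intro u
    rw [Fin.sum_univ_succ, hmm u, hdm u]
    simp

/-- over a perfect graph, every fractional solution of the
clique-constraint LP relaxation has weight at most the maximum weight of a
stable set. -/
theorem lp_relaxation_le_cost {V : Type*} [Fintype V] (G : SimpleGraph V)
    (hG : IsPerfect G) (w : V → ℚ) (hw : ∀ v, 0 ≤ w v) :
    ∀ x : V → ℚ, (∀ v, 0 ≤ x v) →
      (∀ Q : Finset V, IsCliqueF G Q → ∑ v ∈ Q, x v ≤ 1) →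
      ∑ v : V, w v * x v ≤ cost G w univ := by
  classical
  intro x hx hQ
  obtain ⟨N, hN, m, hm⟩ : ∃ N : ℕ, 0 < N ∧ ∃ m : V → ℕ, ∀ v, (m v : ℚ) = N * x v := by
    refine ⟨∏ v, (x v).den, Finset.prod_pos (fun v _ => (x v).den_pos), ?_⟩
    have : ∀ v, ∃ a : ℕ, (a : ℚ) = ((∏ v, (x v).den : ℕ) : ℚ) * x v := by
      intro v
      obtain ⟨b, hb⟩ := Finset.dvd_prod_of_mem (fun v => (x v).den) (Finset.mem_univ v)
      refine ⟨b * (x v).num.toNat, ?_⟩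
      have hnum : (((x v).num.toNat : ℕ) : ℚ) = (x v).num := by
        exact_mod_cast Int.toNat_of_nonneg (Rat.num_nonneg.2 (hx v))
      rw [hb]
      push_cast
      rw [hnum, ← Rat.mul_den_eq_num (x v)]
      ring
    choose m hm using this
    exact ⟨m, hm⟩
  have hN' : (0 : ℚ) < N := by exact_mod_cast hN
  obtain ⟨c, hc, hcm⟩ := exists_stable_cover G hG _ m N rfl (by
    intro Q hq
    have h : ((∑ v ∈ Q, m v : ℕ) : ℚ) ≤ N := by
      push_cast
      rw [Finset.sum_congr rfl (fun v _ => hm v), ← Finset.mul_sum]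
      have := mul_le_mul_of_nonneg_left (hQ Q hq) hN'.le
      rwa [mul_one] at this
    exact_mod_cast h)
  have hcost : ∀ i, ∑ v ∈ c i, w v ≤ cost G w univ := by
    intro i
    unfold cost
    exact Finset.le_sup' (fun O => ∑ v ∈ O, w v) (by simp [hc i])
  have key : N * ∑ v, w v * x v ≤ N * cost G w univ := by
    calc N * ∑ v, w v * x v = ∑ v, w v * m v := by
          rw [Finset.mul_sum]
          exact Finset.sum_congr rfl (fun v _ => by rw [hm v]; ring)
      _ = ∑ v, ∑ i, (if v ∈ c i then w v else 0) := by
          refine Finset.sum_congr rfl (fun v _ => ?_)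
          rw [hcm v]
          push_cast
          rw [Finset.mul_sum]
          exact Finset.sum_congr rfl (fun i _ => by split_ifs <;> simp)
      _ = ∑ i, ∑ v, (if v ∈ c i then w v else 0) := Finset.sum_comm
      _ = ∑ i, ∑ v ∈ c i, w v := Finset.sum_congr rfl (fun i _ => by simp)
      _ ≤ ∑ _i : Fin N, cost G w univ := Finset.sum_le_sum (fun i _ => hcost i)
      _ = N * cost G w univ := by simp
  exact le_of_mul_le_mul_left key hN'
end
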